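/- Gaussian mean width of the intersection of a total-variation ball with a Euclidean ball (Lemma 4). There is an absolute constant c > 0 such that for every integer p ≥ 1 and all reals ρ ≥ r > 0, E[ sup { ⟨G, t⟩ : t ∈ ℝ^p, ‖t‖_TV ≤ ρ, ‖t‖₂ ≤ r } ] ≤ c·√(rρ)·p^{1/4}, where G is a standard Gaussian random vector in ℝ^p (i.i.d. N(0,1) coordinates). -/

import Mathlib

open MeasureTheory

/-- The discrete difference operator `D`: `(Dt)₁ = t₁` and `(Dt)ᵢ = tᵢ − tᵢ₋₁` for `i ≥ 2`. -/
def discreteDiff {p : ℕ} (t : Fin p → ℝ) : Fin p → ℝ :=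
  fun i =>
    if _h : (i : ℕ) = 0 then t i
    else t i - t ⟨(i : ℕ) - 1, lt_of_le_of_lt (Nat.sub_le _ _) i.isLt⟩

/-- The total-variation norm `‖t‖_TV = |t₁| + ∑ |tᵢ₊₁ − tᵢ|`. -/
def tvNorm {p : ℕ} (t : Fin p → ℝ) : ℝ := ∑ i, |discreteDiff t i|

/-- Euclidean norm on `Fin p → ℝ`. -/
noncomputable def euclNorm {p : ℕ} (t : Fin p → ℝ) : ℝ :=
  Real.sqrt (∑ i, t i ^ 2)

/-- Euclidean inner product on `Fin p → ℝ`. -/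
def dotProd {p : ℕ} (z t : Fin p → ℝ) : ℝ := ∑ i, z i * t i

/-!
Each step of the orthonormal Haar transform splits an inner product into a part of normalised block
sums and a part of normalised differences. For a vector `t` with `‖t‖_TV ≤ ρ` and `‖t‖₂ ≤ r`, all
parts have Euclidean norm at most `r`, while after `j` low-pass steps the differences have `ℓ¹`-norm
at most `2 ρ √2 ^ j`. Stop after `J` steps, when `m ≈ p / 2 ^ J` block sums remain. Cauchy–Schwarz
bounds the block sums by a multiple of `r √m`. On the scale with `2 ^ k * m` differences, pair the
part of the noise below a threshold `λ` with the `ℓ¹`-norm and the excess above it with the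
Euclidean norm; the excess has expected norm of order `√(2 ^ k * m) * exp (-λ / 2)`. For `λ`
growing linearly in `k` the scales sum geometrically to a multiple of `r √m + ρ √2 ^ J`, which
`2 ^ J ≈ r √p / ρ` balances. Only the subgaussianity of the linear forms of the noise is used, and
an orthonormal transform preserves it.
-/

open Finset ProbabilityTheory

section Haar

/-- Low-pass half of one step of the Haar transform: normalised sums of consecutive pairs. -/
noncomputable def haarLow (f : ℕ → ℝ) (b : ℕ) : ℝ := (f (2 * b) + f (2 * b + 1)) / √2

/-- High-pass half of one step of the Haar transform: normalised differences of consecutive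
pairs. -/
noncomputable def haarHigh (f : ℕ → ℝ) (b : ℕ) : ℝ := (f (2 * b) - f (2 * b + 1)) / √2

lemma sum_range_two_mul {M : Type*} [AddCommMonoid M] (u : ℕ → M) (n : ℕ) :
    ∑ i ∈ range (2 * n), u i = ∑ b ∈ range n, (u (2 * b) + u (2 * b + 1)) := by
  induction n with
  | zero => simp
  | succ n ih =>
    rw [sum_range_succ, ← ih, Nat.mul_succ, sum_range_succ, sum_range_succ, add_assoc]

lemma sum_mul_eq_haarLow_add_haarHigh (f g : ℕ → ℝ) (n : ℕ) :
    ∑ i ∈ range (2 * n), f i * g i =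
      ∑ b ∈ range n, haarLow f b * haarLow g b + ∑ b ∈ range n, haarHigh f b * haarHigh g b := by
  rw [sum_range_two_mul, ← sum_add_distrib]
  refine sum_congr rfl fun b _ => ?_
  simp only [haarLow, haarHigh, div_mul_div_comm, Real.mul_self_sqrt zero_le_two]
  ring

lemma sum_mul_eq_haar_multiscale (f g : ℕ → ℝ) (J m : ℕ) :
    ∑ i ∈ range (2 ^ J * m), f i * g i =
      ∑ b ∈ range m, haarLow^[J] f b * haarLow^[J] g b +
        ∑ k ∈ range J, ∑ b ∈ range (2 ^ k * m),
          haarHigh (haarLow^[J - 1 - k] f) b * haarHigh (haarLow^[J - 1 - k] g) b := by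
  induction J generalizing f g with
  | zero => simp
  | succ J ih =>
    rw [pow_succ', mul_assoc, sum_mul_eq_haarLow_add_haarHigh, ih, sum_range_succ, add_assoc]
    simp only [← Function.iterate_succ_apply, Nat.add_sub_cancel, Nat.sub_self,
      Function.iterate_zero_apply]
    congr 2
    refine sum_congr rfl fun k hk => ?_
    rw [show (J - 1 - k).succ = J - k by have := mem_range.mp hk; omega]

lemma sum_sq_eq_haarLow_add_haarHigh (f : ℕ → ℝ) (n : ℕ) :
    ∑ i ∈ range (2 * n), f i ^ 2 =
      ∑ b ∈ range n, haarLow f b ^ 2 + ∑ b ∈ range n, haarHigh f b ^ 2 := by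
  simpa only [pow_two] using sum_mul_eq_haarLow_add_haarHigh f f n

lemma sum_sq_haarLow_le (f : ℕ → ℝ) (n : ℕ) :
    ∑ b ∈ range n, haarLow f b ^ 2 ≤ ∑ i ∈ range (2 * n), f i ^ 2 := by
  rw [sum_sq_eq_haarLow_add_haarHigh]
  exact le_add_of_nonneg_right (sum_nonneg fun _ _ => sq_nonneg _)

lemma sum_sq_haarHigh_le (f : ℕ → ℝ) (n : ℕ) :
    ∑ b ∈ range n, haarHigh f b ^ 2 ≤ ∑ i ∈ range (2 * n), f i ^ 2 := by
  rw [sum_sq_eq_haarLow_add_haarHigh]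
  exact le_add_of_nonneg_left (sum_nonneg fun _ _ => sq_nonneg _)

lemma sum_sq_haarLow_iterate_le {f : ℕ → ℝ} {E : ℝ} (hf : ∀ n, ∑ i ∈ range n, f i ^ 2 ≤ E)
    (j n : ℕ) : ∑ b ∈ range n, haarLow^[j] f b ^ 2 ≤ E := by
  induction j generalizing n with
  | zero => exact hf n
  | succ j ih =>
    rw [Function.iterate_succ_apply']
    exact (sum_sq_haarLow_le _ n).trans (ih (2 * n))

lemma haarLow_succ_sub_haarLow (f : ℕ → ℝ) (b : ℕ) :
    haarLow f (b + 1) - haarLow f b =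
      ((f (2 * b + 1) - f (2 * b)) + (f (2 * b + 2) - f (2 * b + 1)) +
        ((f (2 * b + 2) - f (2 * b + 1)) + (f (2 * b + 3) - f (2 * b + 2)))) / √2 := by
  rw [haarLow, haarLow, ← sub_div, Nat.mul_succ]
  ring

lemma sum_abs_sub_haarLow_le {f : ℕ → ℝ} {V : ℝ}
    (hf : ∀ n, ∑ i ∈ range n, |f (i + 1) - f i| ≤ V) (n : ℕ) :
    ∑ b ∈ range n, |haarLow f (b + 1) - haarLow f b| ≤ √2 * V := by
  set d : ℕ → ℝ := fun i => |f (i + 1) - f i|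
  have hstep (b : ℕ) : |haarLow f (b + 1) - haarLow f b| ≤
      ((d (2 * b) + d (2 * b + 1)) + (d (2 * b + 1) + d (2 * b + 2))) / √2 := by
    rw [haarLow_succ_sub_haarLow, abs_div, abs_of_pos (by positivity : 0 < √2)]
    gcongr
    exact (abs_add_le _ _).trans (add_le_add (abs_add_le _ _) (abs_add_le _ _))
  have hshift : ∑ b ∈ range n, (d (2 * b + 1) + d (2 * b + 2)) ≤ V := by
    rw [← sum_range_two_mul fun i => d (i + 1)]
    have := hf (2 * n + 1)
    rw [sum_range_succ'] at this
    linarith [abs_nonneg (f (0 + 1) - f 0)]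
  calc ∑ b ∈ range n, |haarLow f (b + 1) - haarLow f b|
      ≤ (∑ i ∈ range (2 * n), d i + ∑ b ∈ range n, (d (2 * b + 1) + d (2 * b + 2))) / √2 := by
        rw [sum_range_two_mul, ← sum_add_distrib, sum_div]
        exact sum_le_sum fun b _ => hstep b
    _ ≤ (V + V) / √2 := by gcongr; exact hf (2 * n)
    _ = √2 * V := by rw [← two_mul, mul_div_right_comm, Real.div_sqrt]

lemma sum_abs_sub_haarLow_iterate_le {f : ℕ → ℝ} {V : ℝ}
    (hf : ∀ n, ∑ i ∈ range n, |f (i + 1) - f i| ≤ V) (j n : ℕ) :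
    ∑ b ∈ range n, |haarLow^[j] f (b + 1) - haarLow^[j] f b| ≤ √2 ^ j * V := by
  induction j generalizing n with
  | zero => simpa using hf n
  | succ j ih =>
    rw [Function.iterate_succ_apply', pow_succ', mul_assoc]
    exact sum_abs_sub_haarLow_le ih n

lemma sum_abs_haarHigh_le (f : ℕ → ℝ) (n : ℕ) :
    ∑ b ∈ range n, |haarHigh f b| ≤ ∑ i ∈ range (2 * n), |f (i + 1) - f i| := by
  rw [sum_range_two_mul]
  refine sum_le_sum fun b _ => ?_
  rw [haarHigh, abs_div, abs_of_pos (by positivity : 0 < √2), abs_sub_comm]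
  exact (div_le_self (abs_nonneg _) (Real.one_le_sqrt.mpr one_le_two)).trans
    (le_add_of_nonneg_right (abs_nonneg _))

end Haar

section SoftThreshold

variable {ι : Type*}

/-- Euclidean norm, over the index set `s`, of the soft thresholding of `x` at level `lam`. -/
noncomputable def softThresholdNorm (s : Finset ι) (lam : ℝ) (x : ι → ℝ) : ℝ :=
  √(∑ b ∈ s, max (|x b| - lam) 0 ^ 2)

lemma sum_mul_le_threshold (s : Finset ι) (lam : ℝ) (x y : ι → ℝ) :
    ∑ b ∈ s, x b * y b ≤
      lam * ∑ b ∈ s, |y b| + √(∑ b ∈ s, y b ^ 2) * softThresholdNorm s lam x := by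
  have hterm (b : ι) : x b * y b ≤ lam * |y b| + |y b| * max (|x b| - lam) 0 := by
    calc x b * y b ≤ |x b| * |y b| := (le_abs_self _).trans_eq (abs_mul _ _)
      _ = lam * |y b| + |y b| * (|x b| - lam) := by ring
      _ ≤ _ := by gcongr; exact le_max_left _ _
  calc ∑ b ∈ s, x b * y b
      ≤ lam * ∑ b ∈ s, |y b| + ∑ b ∈ s, |y b| * max (|x b| - lam) 0 := by
        rw [mul_sum, ← sum_add_distrib]
        exact sum_le_sum fun b _ => hterm b
    _ ≤ _ := by
        gcongr
        simpa only [sq_abs, softThresholdNorm] using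
          Real.sum_mul_le_sqrt_mul_sqrt s (fun b => |y b|) fun b => max (|x b| - lam) 0

lemma sum_mul_le_of_l1_l2_le {s : Finset ι} {y : ι → ℝ} {lam A r : ℝ} (hlam : 0 ≤ lam)
    (hr : 0 ≤ r) (hl1 : ∑ b ∈ s, |y b| ≤ A) (hl2 : ∑ b ∈ s, y b ^ 2 ≤ r ^ 2) (x : ι → ℝ) :
    ∑ b ∈ s, x b * y b ≤ lam * A + r * softThresholdNorm s lam x := by
  refine (sum_mul_le_threshold s lam x y).trans ?_
  gcongr
  · exact Real.sqrt_nonneg _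
  · exact (Real.sqrt_le_left hr).mpr hl2

lemma sq_max_abs_sub_le_exp (x lam : ℝ) :
    max (|x| - lam) 0 ^ 2 ≤ 2 * Real.exp (-lam) * (Real.exp x + Real.exp (-x)) := by
  rcases le_total |x| lam with h | h
  · rw [max_eq_right (sub_nonpos.mpr h), zero_pow two_ne_zero]
    positivity
  · rw [max_eq_left (sub_nonneg.mpr h)]
    calc (|x| - lam) ^ 2 ≤ 2 * Real.exp (|x| - lam) := by
          linarith [Real.quadratic_le_exp_of_nonneg (sub_nonneg.mpr h)]
      _ = 2 * Real.exp (-lam) * Real.exp |x| := by rw [sub_eq_neg_add, Real.exp_add]; ring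
      _ ≤ _ := by gcongr; exact Real.exp_abs_le x

end SoftThreshold

section Subgaussian

open scoped NNReal

variable {Ω ι : Type*} [MeasurableSpace Ω] {μ : Measure Ω}

lemma integral_sqrt_le [IsProbabilityMeasure μ] {f : Ω → ℝ} (hf : Integrable f μ)
    (hf_nonneg : ∀ ω, 0 ≤ f ω) :
    Integrable (fun ω => √(f ω)) μ ∧ ∫ ω, √(f ω) ∂μ ≤ √(∫ ω, f ω ∂μ) := by
  have hmeas : AEStronglyMeasurable (fun ω => √(f ω)) μ :=
    Real.continuous_sqrt.comp_aestronglyMeasurable hf.aestronglyMeasurable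
  have hint : Integrable (fun ω => √(f ω)) μ :=
    ((memLp_two_iff_integrable_sq hmeas).mpr
      (by simpa only [Real.sq_sqrt (hf_nonneg _)] using hf)).integrable one_le_two
  exact ⟨hint, Real.strictConcaveOn_sqrt.concaveOn.le_map_integral
    Real.continuous_sqrt.continuousOn isClosed_Ici (.of_forall hf_nonneg) hf hint⟩

lemma integral_exp_add_exp_neg_le {X : Ω → ℝ} {c : ℝ≥0} (hX : HasSubgaussianMGF X c μ) :
    Integrable (fun ω => Real.exp (X ω) + Real.exp (-X ω)) μ ∧
      ∫ ω, (Real.exp (X ω) + Real.exp (-X ω)) ∂μ ≤ 2 * Real.exp (c / 2) := by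
  have hpos : Integrable (fun ω => Real.exp (X ω)) μ := by
    simpa using hX.integrable_exp_mul 1
  have hneg : Integrable (fun ω => Real.exp (-X ω)) μ := by
    simpa using hX.integrable_exp_mul (-1)
  refine ⟨hpos.add hneg, ?_⟩
  have hpos_le : ∫ ω, Real.exp (X ω) ∂μ ≤ Real.exp (c / 2) := by
    simpa [mgf] using hX.mgf_le 1
  have hneg_le : ∫ ω, Real.exp (-X ω) ∂μ ≤ Real.exp (c / 2) := by
    simpa [mgf] using hX.mgf_le (-1)
  rw [integral_add hpos hneg]
  linarith

lemma integral_sq_max_abs_sub_le {X : Ω → ℝ} {c : ℝ≥0} (hX : HasSubgaussianMGF X c μ) (lam : ℝ) :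
    Integrable (fun ω => max (|X ω| - lam) 0 ^ 2) μ ∧
      ∫ ω, max (|X ω| - lam) 0 ^ 2 ∂μ ≤ 4 * Real.exp (c / 2 - lam) := by
  obtain ⟨hexp, hexp_le⟩ := integral_exp_add_exp_neg_le hX
  have hmeas : AEStronglyMeasurable (fun ω => max (|X ω| - lam) 0 ^ 2) μ := by
    have := hX.aemeasurable
    exact AEMeasurable.aestronglyMeasurable (by fun_prop)
  have hint : Integrable (fun ω => max (|X ω| - lam) 0 ^ 2) μ :=
    (hexp.const_mul (2 * Real.exp (-lam))).mono' hmeas <| .of_forall fun ω => by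
      simpa only [norm_pow, Real.norm_eq_abs, sq_abs] using sq_max_abs_sub_le_exp (X ω) lam
  refine ⟨hint, ?_⟩
  calc ∫ ω, max (|X ω| - lam) 0 ^ 2 ∂μ
      ≤ 2 * Real.exp (-lam) * ∫ ω, (Real.exp (X ω) + Real.exp (-X ω)) ∂μ := by
        rw [← integral_const_mul]
        exact integral_mono hint (hexp.const_mul _) fun ω => sq_max_abs_sub_le_exp (X ω) lam
    _ ≤ 2 * Real.exp (-lam) * (2 * Real.exp (c / 2)) := by gcongr
    _ = 4 * Real.exp (c / 2 - lam) := by rw [sub_eq_neg_add, Real.exp_add]; ring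

lemma integral_softThresholdNorm_le [IsProbabilityMeasure μ] {X : Ω → ι → ℝ} {c : ℝ≥0}
    {s : Finset ι} (hX : ∀ b ∈ s, HasSubgaussianMGF (fun ω => X ω b) c μ) (lam : ℝ) :
    Integrable (fun ω => softThresholdNorm s lam (X ω)) μ ∧
      ∫ ω, softThresholdNorm s lam (X ω) ∂μ ≤
        2 * Real.exp ((c / 2 - lam) / 2) * √(#s : ℝ) := by
  have hint (b : ι) (hb : b ∈ s) := (integral_sq_max_abs_sub_le (hX b hb) lam).1
  obtain ⟨hsqrt, hsqrt_le⟩ := integral_sqrt_le (integrable_finsetSum s hint)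
    fun ω => sum_nonneg fun _ _ => sq_nonneg _
  refine ⟨hsqrt, hsqrt_le.trans (Real.sqrt_le_iff.mpr ⟨by positivity, ?_⟩)⟩
  rw [integral_finsetSum s hint]
  calc ∑ b ∈ s, ∫ ω, max (|X ω b| - lam) 0 ^ 2 ∂μ
      ≤ ∑ _b ∈ s, 4 * Real.exp (c / 2 - lam) :=
        sum_le_sum fun b hb => (integral_sq_max_abs_sub_le (hX b hb) lam).2
    _ = (2 * Real.exp ((c / 2 - lam) / 2) * √(#s : ℝ)) ^ 2 := by
        rw [sum_const, nsmul_eq_mul, mul_pow, mul_pow, Real.sq_sqrt (Nat.cast_nonneg _),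
          ← Real.exp_nat_mul, Nat.cast_ofNat, mul_div_cancel₀ _ (two_ne_zero' ℝ)]
        ring

/-- The random vector `X`, indexed by `ι`, is subgaussian with variance proxy `1` in every
direction: the linear forms `∑ a i * X i` over the unit Euclidean ball are `1`-subgaussian. Only
finitely supported directions are tested, so that `ι` may be infinite. -/
def HasSubgaussianLinearForms (X : Ω → ι → ℝ) (μ : Measure Ω) : Prop :=
  ∀ (s : Finset ι) (a : ι → ℝ), ∑ i ∈ s, a i ^ 2 ≤ 1 →
    HasSubgaussianMGF (fun ω => ∑ i ∈ s, a i * X ω i) 1 μ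

namespace HasSubgaussianLinearForms

lemma of_iIndepFun {X : Ω → ι → ℝ} (hindep : iIndepFun (fun i ω => X ω i) μ)
    (hX : ∀ i, HasSubgaussianMGF (fun ω => X ω i) 1 μ) : HasSubgaussianLinearForms X μ := by
  intro s a ha
  have hsum := HasSubgaussianMGF.sum_of_iIndepFun (s := s)
    (hindep.comp (fun i x => a i * x) fun i => measurable_const_mul (a i))
    fun i _ => (hX i).const_mul (a i)
  refine ⟨hsum.integrable_exp_mul, fun t => (hsum.mgf_le t).trans ?_⟩
  gcongr
  rw [← NNReal.coe_le_coe, NNReal.coe_sum]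
  exact (sum_le_sum fun i _ => (mul_one (a i ^ 2)).le).trans ha

lemma hasSubgaussianMGF {X : Ω → ι → ℝ} (hX : HasSubgaussianLinearForms X μ) (i : ι) :
    HasSubgaussianMGF (fun ω => X ω i) 1 μ := by
  simpa using hX {i} (fun _ => 1) (by simp)

lemma mul_add_mul {X : Ω → ℕ → ℝ} (hX : HasSubgaussianLinearForms X μ) {α β : ℝ}
    (hαβ : α ^ 2 + β ^ 2 ≤ 1) :
    HasSubgaussianLinearForms (fun ω b => α * X ω (2 * b) + β * X ω (2 * b + 1)) μ := by
  intro s a ha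
  have hdisj : (s : Set ℕ).PairwiseDisjoint fun b => ({2 * b, 2 * b + 1} : Finset ℕ) := by
    intro b _ b' _ hbb'
    simp only [Function.onFun, disjoint_left, mem_insert, mem_singleton]
    omega
  have hsum (u : ℕ → ℝ) : ∑ i ∈ s.biUnion fun b => {2 * b, 2 * b + 1}, u i =
      ∑ b ∈ s, (u (2 * b) + u (2 * b + 1)) := by
    rw [sum_biUnion hdisj]
    exact sum_congr rfl fun b _ => sum_pair (by omega)
  have heven (b : ℕ) : 2 * b / 2 = b := by omega
  have hodd (b : ℕ) : (2 * b + 1) / 2 = b := by omega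
  convert hX (s.biUnion fun b => {2 * b, 2 * b + 1})
    (fun i => (if Even i then α else β) * a (i / 2)) ?_ using 2 with ω
  · rw [hsum]
    simp only [even_two_mul, if_true, Nat.not_even_bit1, if_false, heven, hodd]
    exact sum_congr rfl fun b _ => by ring
  · rw [hsum]
    simp only [even_two_mul, if_true, Nat.not_even_bit1, if_false, heven, hodd, mul_pow,
      ← add_mul]
    exact (sum_le_sum fun b _ => mul_le_of_le_one_left (sq_nonneg (a b)) hαβ).trans ha

lemma comp_haarLow {X : Ω → ℕ → ℝ} (hX : HasSubgaussianLinearForms X μ) :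
    HasSubgaussianLinearForms (fun ω => haarLow (X ω)) μ := by
  convert hX.mul_add_mul (α := 1 / √2) (β := 1 / √2) (by norm_num [div_pow]) using 3 with ω b
  rw [haarLow]
  ring

lemma comp_haarHigh {X : Ω → ℕ → ℝ} (hX : HasSubgaussianLinearForms X μ) :
    HasSubgaussianLinearForms (fun ω => haarHigh (X ω)) μ := by
  convert hX.mul_add_mul (α := 1 / √2) (β := -(1 / √2)) (by norm_num [div_pow]) using 3 with ω b
  rw [haarHigh]
  ring

lemma comp_haarLow_iterate {X : Ω → ℕ → ℝ} (hX : HasSubgaussianLinearForms X μ) (j : ℕ) :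
    HasSubgaussianLinearForms (fun ω => haarLow^[j] (X ω)) μ := by
  induction j with
  | zero => exact hX
  | succ j ih => simpa only [Function.iterate_succ_apply'] using ih.comp_haarLow

end HasSubgaussianLinearForms

lemma integral_softThresholdNorm_le_of_linearForms [IsProbabilityMeasure μ] {X : Ω → ι → ℝ}
    (hX : HasSubgaussianLinearForms X μ) (s : Finset ι) (lam : ℝ) :
    Integrable (fun ω => softThresholdNorm s lam (X ω)) μ ∧
      ∫ ω, softThresholdNorm s lam (X ω) ∂μ ≤ 3 * Real.exp (-lam / 2) * √(#s : ℝ) := by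
  obtain ⟨hint, hle⟩ :=
    integral_softThresholdNorm_le (s := s) (fun b _ => hX.hasSubgaussianMGF b) lam
  refine ⟨hint, hle.trans ?_⟩
  have hexp : Real.exp (1 / 4) ≤ 3 / 2 := by
    refine le_of_pow_le_pow_left₀ four_ne_zero (by norm_num) ?_
    rw [← Real.exp_nat_mul, Nat.cast_ofNat, mul_one_div_cancel (four_ne_zero' ℝ)]
    linarith [Real.exp_one_lt_d9]
  refine mul_le_mul_of_nonneg_right ?_ (Real.sqrt_nonneg _)
  calc 2 * Real.exp (((1 : ℝ≥0) / 2 - lam) / 2)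
      = 2 * Real.exp (1 / 4) * Real.exp (-lam / 2) := by
        rw [mul_assoc, ← Real.exp_add, NNReal.coe_one]
        ring_nf
    _ ≤ 2 * (3 / 2) * Real.exp (-lam / 2) := by gcongr
    _ = 3 * Real.exp (-lam / 2) := by ring

lemma hasSubgaussianMGF_id_gaussianReal (v : ℝ≥0) :
    HasSubgaussianMGF id v (gaussianReal 0 v) where
  integrable_exp_mul t := integrable_exp_mul_gaussianReal t
  mgf_le t := by simp [mgf_id_gaussianReal]

lemma hasSubgaussianLinearForms_pi_gaussianReal (ι : Type*) [Fintype ι] :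
    HasSubgaussianLinearForms (fun g : ι → ℝ => g) (Measure.pi fun _ => gaussianReal 0 1) := by
  refine .of_iIndepFun (iIndepFun_pi (X := fun _ x => x) fun _ => aemeasurable_id) fun i =>
    .of_map (X := id) (measurable_pi_apply i).aemeasurable ?_
  rw [(measurePreserving_eval (fun _ : ι => gaussianReal 0 1) i).map_eq]
  exact hasSubgaussianMGF_id_gaussianReal 1

end Subgaussian

section Multiscale

/-- Upper bound, through `J` steps of the Haar transform followed by thresholding at level
`lam k` on the scale with `2 ^ k * m` coefficients, for the inner product of `x` with a sequence
supported on `2 ^ J * m` indices, of Euclidean norm at most `r` and total variation at most `V`. -/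
noncomputable def haarMajorant (J m : ℕ) (V r : ℝ) (lam : ℕ → ℝ) (x : ℕ → ℝ) : ℝ :=
  r * softThresholdNorm (range m) 0 (haarLow^[J] x) +
    ∑ k ∈ range J, (lam k * (√2 ^ (J - 1 - k) * V) +
      r * softThresholdNorm (range (2 ^ k * m)) (lam k) (haarHigh (haarLow^[J - 1 - k] x)))

lemma sum_mul_le_haarMajorant {f : ℕ → ℝ} {V r : ℝ} (hr : 0 ≤ r)
    (hV : ∀ n, ∑ i ∈ range n, |f (i + 1) - f i| ≤ V)
    (hl2 : ∀ n, ∑ i ∈ range n, f i ^ 2 ≤ r ^ 2) (J m : ℕ) {lam : ℕ → ℝ} (hlam : ∀ k, 0 ≤ lam k)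
    (x : ℕ → ℝ) : ∑ i ∈ range (2 ^ J * m), x i * f i ≤ haarMajorant J m V r lam x := by
  rw [sum_mul_eq_haar_multiscale, haarMajorant]
  refine add_le_add ?_ (sum_le_sum fun k _ => ?_)
  · simpa using sum_mul_le_of_l1_l2_le le_rfl hr le_rfl (sum_sq_haarLow_iterate_le hl2 J m)
      (haarLow^[J] x)
  · exact sum_mul_le_of_l1_l2_le (hlam k) hr
      ((sum_abs_haarHigh_le _ _).trans (sum_abs_sub_haarLow_iterate_le hV _ _))
      ((sum_sq_haarHigh_le _ _).trans (sum_sq_haarLow_iterate_le hl2 _ _)) _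

variable {Ω : Type*} [MeasurableSpace Ω] {μ : Measure Ω} [IsProbabilityMeasure μ]

lemma integral_haarMajorant_le {X : Ω → ℕ → ℝ} (hX : HasSubgaussianLinearForms X μ)
    {r : ℝ} (hr : 0 ≤ r) (J m : ℕ) (V : ℝ) (lam : ℕ → ℝ) :
    Integrable (fun ω => haarMajorant J m V r lam (X ω)) μ ∧
      ∫ ω, haarMajorant J m V r lam (X ω) ∂μ ≤
        3 * (r * √m) + ∑ k ∈ range J, (lam k * (√2 ^ (J - 1 - k) * V) +
          3 * (r * √m) * (√2 ^ k * Real.exp (-lam k / 2))) := by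
  obtain ⟨hlow, hlow_le⟩ :=
    integral_softThresholdNorm_le_of_linearForms (hX.comp_haarLow_iterate J) (range m) 0
  choose hhigh hhigh_le using fun k => integral_softThresholdNorm_le_of_linearForms
    (hX.comp_haarLow_iterate (J - 1 - k)).comp_haarHigh (range (2 ^ k * m)) (lam k)
  have hdetail (k : ℕ) : Integrable (fun ω => lam k * (√2 ^ (J - 1 - k) * V) +
      r * softThresholdNorm (range (2 ^ k * m)) (lam k) (haarHigh (haarLow^[J - 1 - k] (X ω)))) μ :=
    (integrable_const _).add ((hhigh k).const_mul r)
  have hsum := integrable_finsetSum (range J) fun k _ => hdetail k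
  have hsqrt (k : ℕ) : √((2 ^ k * m : ℕ) : ℝ) = √2 ^ k * √m := by
    rw [Nat.cast_mul, Real.sqrt_mul (Nat.cast_nonneg _), Nat.cast_pow, Nat.cast_ofNat,
      Real.sqrt_eq_rpow 2, Real.rpow_pow_comm zero_le_two, Real.sqrt_eq_rpow]
  refine ⟨(hlow.const_mul r).add hsum, ?_⟩
  simp only [haarMajorant]
  rw [integral_add (hlow.const_mul r) hsum, integral_const_mul,
    integral_finsetSum _ fun k _ => hdetail k]
  refine add_le_add ?_ (sum_le_sum fun k _ => ?_)
  · calc _ ≤ r * (3 * Real.exp (-0 / 2) * √(#(range m) : ℝ)) := by gcongr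
      _ = 3 * (r * √m) := by
        rw [card_range, neg_zero, zero_div, Real.exp_zero]
        ring
  · rw [integral_add (integrable_const _) ((hhigh k).const_mul r), integral_const,
      probReal_univ, one_smul, integral_const_mul]
    refine add_le_add le_rfl ?_
    calc _ ≤ r * (3 * Real.exp (-lam k / 2) * √(#(range (2 ^ k * m)) : ℝ)) := 
          mul_le_mul_of_nonneg_left (hhigh_le k) hr
      _ = 3 * (r * √m) * (√2 ^ k * Real.exp (-lam k / 2)) := by
        rw [card_range, hsqrt]
        ring

end Multiscale

section ZeroExtension

variable {p : ℕ}

/-- Extension of a vector by zero to a sequence, so that the Haar transform, which acts on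
sequences, applies to vectors of arbitrary dimension. -/
noncomputable def zeroExtend (t : Fin p → ℝ) (i : ℕ) : ℝ :=
  if h : i < p then t ⟨i, h⟩ else 0

lemma zeroExtend_val (t : Fin p → ℝ) (i : Fin p) : zeroExtend t i = t i := by
  simp [zeroExtend]

lemma zeroExtend_of_le (t : Fin p → ℝ) {i : ℕ} (hi : p ≤ i) : zeroExtend t i = 0 := by
  simp [zeroExtend, hi]

lemma sum_range_le_sum_fin {u : ℕ → ℝ} (hu : ∀ i, p ≤ i → u i = 0) (hu_nonneg : ∀ i, 0 ≤ u i)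
    (n : ℕ) : ∑ i ∈ range n, u i ≤ ∑ i : Fin p, u i := by
  rw [← sum_range, ← eventually_constant_sum hu (le_max_right n p)]
  exact sum_le_sum_of_subset_of_nonneg (range_subset_range.mpr (le_max_left n p))
    fun i _ _ => hu_nonneg i

lemma dotProd_eq_sum_zeroExtend (z t : Fin p → ℝ) {n : ℕ} (hn : p ≤ n) :
    dotProd z t = ∑ i ∈ range n, zeroExtend z i * zeroExtend t i := by
  rw [eventually_constant_sum (fun i hi => by rw [zeroExtend_of_le t hi, mul_zero]) hn, sum_range]
  simp only [zeroExtend_val, dotProd]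

lemma sum_sq_zeroExtend_le (t : Fin p → ℝ) (n : ℕ) :
    ∑ i ∈ range n, zeroExtend t i ^ 2 ≤ euclNorm t ^ 2 := by
  rw [euclNorm, Real.sq_sqrt (sum_nonneg fun _ _ => sq_nonneg _)]
  simpa only [zeroExtend_val] using sum_range_le_sum_fin (p := p)
    (u := fun i => zeroExtend t i ^ 2) (fun i hi => by simp [zeroExtend_of_le t hi])
    (fun i => sq_nonneg _) n

lemma zeroExtend_discreteDiff_zero (t : Fin p → ℝ) :
    zeroExtend (discreteDiff t) 0 = zeroExtend t 0 := by
  simp [zeroExtend, discreteDiff]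

lemma zeroExtend_discreteDiff_succ (t : Fin p → ℝ) {n : ℕ} (hn : n + 1 < p) :
    zeroExtend (discreteDiff t) (n + 1) = zeroExtend t (n + 1) - zeroExtend t n := by
  simp [zeroExtend, discreteDiff, hn, n.lt_succ_self.trans hn]

-- The factor `2` pays for the jump from the last coordinate down to `0`.
lemma sum_abs_sub_zeroExtend_add_abs_le (t : Fin p → ℝ) (n : ℕ) :
    ∑ i ∈ range n, |zeroExtend t (i + 1) - zeroExtend t i| + |zeroExtend t n| ≤ 2 * tvNorm t := by
  have hpartial : ∑ i ∈ range n, |zeroExtend t (i + 1) - zeroExtend t i| + |zeroExtend t n| ≤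
      2 * ∑ i ∈ range (n + 1), |zeroExtend (discreteDiff t) i| := by
    induction n with
    | zero =>
      simp only [range_zero, sum_empty, zero_add, sum_range_one, zeroExtend_discreteDiff_zero]
      linarith [abs_nonneg (zeroExtend t 0)]
    | succ n ih =>
      rw [sum_range_succ, sum_range_succ _ (n + 1)]
      rcases lt_or_ge (n + 1) p with hn | hn
      · rw [zeroExtend_discreteDiff_succ t hn]
        linarith [abs_sub_abs_le_abs_sub (zeroExtend t (n + 1)) (zeroExtend t n)]
      · rw [zeroExtend_of_le t hn, zeroExtend_of_le _ hn, zero_sub, abs_neg, abs_zero]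
        linarith
  have htail := sum_range_le_sum_fin (p := p) (u := fun i => |zeroExtend (discreteDiff t) i|)
    (fun i hi => by simp [zeroExtend_of_le _ hi]) (fun i => abs_nonneg _) (n + 1)
  simp only [zeroExtend_val] at htail
  rw [tvNorm]
  linarith

lemma sum_abs_sub_zeroExtend_le (t : Fin p → ℝ) (n : ℕ) :
    ∑ i ∈ range n, |zeroExtend t (i + 1) - zeroExtend t i| ≤ 2 * tvNorm t :=
  (le_add_of_nonneg_right (abs_nonneg _)).trans (sum_abs_sub_zeroExtend_add_abs_le t n)

lemma abs_le_two_mul_tvNorm (t : Fin p → ℝ) (i : Fin p) : |t i| ≤ 2 * tvNorm t := by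
  rw [← zeroExtend_val t i]
  exact (le_add_of_nonneg_left (sum_nonneg fun _ _ => abs_nonneg _)).trans
    (sum_abs_sub_zeroExtend_add_abs_le t i)

lemma euclNorm_le_two_mul_tvNorm_mul_sqrt (t : Fin p → ℝ) : euclNorm t ≤ 2 * tvNorm t * √p := by
  have htv : 0 ≤ tvNorm t := sum_nonneg fun _ _ => abs_nonneg _
  refine Real.sqrt_le_iff.mpr ⟨by positivity, ?_⟩
  calc ∑ i, t i ^ 2 ≤ ∑ _i : Fin p, (2 * tvNorm t) ^ 2 :=
        sum_le_sum fun i _ => sq_le_sq' (abs_le.mp (abs_le_two_mul_tvNorm t i)).1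
          (abs_le.mp (abs_le_two_mul_tvNorm t i)).2
    _ = (2 * tvNorm t * √p) ^ 2 := by
        rw [sum_const, card_univ, Fintype.card_fin, nsmul_eq_mul, mul_pow _ (√p),
          Real.sq_sqrt (Nat.cast_nonneg _), mul_comm]

lemma HasSubgaussianLinearForms.comp_zeroExtend {Ω : Type*} [MeasurableSpace Ω] {μ : Measure Ω}
    {X : Ω → Fin p → ℝ} (hX : HasSubgaussianLinearForms X μ) :
    HasSubgaussianLinearForms (fun ω => zeroExtend (X ω)) μ := by
  intro s a ha
  have hinj := Fin.val_injective.injOn (s := Fin.val (n := p) ⁻¹' s)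
  convert hX (s.preimage Fin.val hinj) (fun i => a i) ?_ using 2 with ω
  · rw [← sum_preimage Fin.val s hinj]
    · simp only [zeroExtend_val]
    · intro i _ hi
      have hi : p ≤ i := by simpa using hi
      simp only [zeroExtend_of_le _ hi, mul_zero]
  · refine le_trans ?_ ha
    rw [sum_preimage' Fin.val s hinj fun i => a i ^ 2]
    exact sum_le_sum_of_subset_of_nonneg (filter_subset _ _) fun i _ _ => sq_nonneg _

end ZeroExtension

section Width

variable {p : ℕ} {ρ r : ℝ}

/-- The intersection of the total-variation ball of radius `ρ` with the Euclidean ball of radius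
`r`, the index set of the suprema bounded here. -/
def tvInterEuclBall (p : ℕ) (ρ r : ℝ) : Set (Fin p → ℝ) :=
  {t | tvNorm t ≤ ρ ∧ euclNorm t ≤ r}

lemma zero_mem_tvInterEuclBall (hρ : 0 ≤ ρ) (hr : 0 ≤ r) : 0 ∈ tvInterEuclBall p ρ r := by
  simp [tvInterEuclBall, tvNorm, discreteDiff, euclNorm, hρ, hr]

lemma tvInterEuclBall_min_radius :
    tvInterEuclBall p ρ (min r (2 * ρ * √p)) = tvInterEuclBall p ρ r := by
  ext t
  refine and_congr_right fun ht => ⟨fun h => h.trans (min_le_left _ _), fun h => le_min h ?_⟩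
  exact (euclNorm_le_two_mul_tvNorm_mul_sqrt t).trans (by gcongr)

lemma dotProd_le_haarMajorant (hr : 0 ≤ r) {J m : ℕ} (hp : p ≤ 2 ^ J * m)
    {lam : ℕ → ℝ} (hlam : ∀ k, 0 ≤ lam k) (x : Fin p → ℝ) {t : Fin p → ℝ}
    (ht : t ∈ tvInterEuclBall p ρ r) :
    dotProd x t ≤ haarMajorant J m (2 * ρ) r lam (zeroExtend x) := by
  rw [dotProd_eq_sum_zeroExtend x t hp]
  refine sum_mul_le_haarMajorant hr (fun n => ?_) (fun n => ?_) J m hlam _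
  · exact (sum_abs_sub_zeroExtend_le t n).trans (by linarith [ht.1])
  · exact (sum_sq_zeroExtend_le t n).trans (pow_le_pow_left₀ (Real.sqrt_nonneg _) ht.2 2)

variable {Ω : Type*} [MeasurableSpace Ω] {μ : Measure Ω}

lemma integral_sSup_image_dotProd_le {S : Set (Fin p → ℝ)} (h0 : 0 ∈ S) {X : Ω → Fin p → ℝ}
    {H : Ω → ℝ} (hH : Integrable H μ) (hle : ∀ ω, ∀ t ∈ S, dotProd (X ω) t ≤ H ω) :
    ∫ ω, sSup ((fun t => dotProd (X ω) t) '' S) ∂μ ≤ ∫ ω, H ω ∂μ := by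
  have hbound (ω : Ω) : ∀ y ∈ (fun t => dotProd (X ω) t) '' S, y ≤ H ω := by
    rintro _ ⟨t, ht, rfl⟩
    exact hle ω t ht
  refine integral_mono_of_nonneg (.of_forall fun ω => ?_) hH (.of_forall fun ω => ?_)
  · exact le_csSup ⟨H ω, hbound ω⟩ ⟨0, h0, by simp [dotProd]⟩
  · exact csSup_le ⟨_, 0, h0, rfl⟩ (hbound ω)

variable [IsProbabilityMeasure μ] {X : Ω → Fin p → ℝ}

lemma integral_sSup_tvInterEuclBall_le_haar (hX : HasSubgaussianLinearForms X μ) (hρ : 0 ≤ ρ)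
    (hr : 0 ≤ r) {J m : ℕ} (hp : p ≤ 2 ^ J * m) {lam : ℕ → ℝ} (hlam : ∀ k, 0 ≤ lam k) :
    ∫ ω, sSup ((fun t => dotProd (X ω) t) '' tvInterEuclBall p ρ r) ∂μ ≤
      3 * (r * √m) + ∑ k ∈ range J, (lam k * (√2 ^ (J - 1 - k) * (2 * ρ)) +
        3 * (r * √m) * (√2 ^ k * Real.exp (-lam k / 2))) := by
  obtain ⟨hint, hle⟩ := integral_haarMajorant_le hX.comp_zeroExtend hr J m (2 * ρ) lam
  exact (integral_sSup_image_dotProd_le (zero_mem_tvInterEuclBall hρ hr) hint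
    fun ω t ht => dotProd_le_haarMajorant hr hp hlam (X ω) ht).trans hle

lemma integral_sSup_tvInterEuclBall_le_radius (hX : HasSubgaussianLinearForms X μ) (hρ : 0 ≤ ρ)
    (hr : 0 ≤ r) :
    ∫ ω, sSup ((fun t => dotProd (X ω) t) '' tvInterEuclBall p ρ r) ∂μ ≤ 3 * (r * √p) := by
  simpa using integral_sSup_tvInterEuclBall_le_haar hX hρ hr (J := 0) (m := p) (by simp)
    (lam := 0) fun _ => le_rfl

lemma sum_succ_mul_inv_sqrt_two_pow_le (J : ℕ) :
    ∑ k ∈ range J, ((k : ℝ) + 1) * (√2)⁻¹ ^ (k + 1) ≤ 9 := by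
  have hratio : (√2)⁻¹ ≤ (5 / 7 : ℝ) := by
    rw [inv_le_comm₀ (by positivity) (by norm_num)]
    exact Real.le_sqrt_of_sq_le (by norm_num)
  have hseries := hasSum_coe_mul_geometric_of_norm_lt_one (r := (5 / 7 : ℝ)) (by norm_num)
  calc ∑ k ∈ range J, ((k : ℝ) + 1) * (√2)⁻¹ ^ (k + 1)
      ≤ ∑ k ∈ range J, ((k : ℝ) + 1) * (5 / 7) ^ (k + 1) := by gcongr
    _ = ∑ k ∈ range (J + 1), (k : ℝ) * (5 / 7) ^ k := by simp [sum_range_succ']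
    _ ≤ 5 / 7 / (1 - 5 / 7) ^ 2 := sum_le_hasSum _ (fun k _ => by positivity) hseries
    _ ≤ 9 := by norm_num

lemma sqrt_two_pow_mul_exp_neg_le (k : ℕ) :
    √2 ^ k * Real.exp (-((k : ℝ) + 1)) ≤ (√2)⁻¹ ^ (k + 1) := by
  have hexp : Real.exp (-1) ≤ (√2)⁻¹ * (√2)⁻¹ := by
    rw [Real.exp_neg, ← mul_inv, Real.mul_self_sqrt zero_le_two]
    exact inv_anti₀ two_pos (by linarith [Real.add_one_le_exp 1])
  calc √2 ^ k * Real.exp (-((k : ℝ) + 1)) = √2 ^ k * Real.exp (-1) ^ (k + 1) := by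
        rw [← Real.exp_nat_mul, Nat.cast_succ, mul_neg_one]
    _ ≤ √2 ^ (k + 1) * ((√2)⁻¹ * (√2)⁻¹) ^ (k + 1) := by
        gcongr
        · exact Real.one_le_sqrt.mpr one_le_two
        · exact k.le_succ
    _ = (√2)⁻¹ ^ (k + 1) := by rw [← mul_pow, mul_inv_cancel_left₀ (by positivity)]

-- The thresholds `2 * (k + 1)` grow just fast enough for the exponential tails to beat the number
-- `2 ^ k * m` of coefficients on scale `k`.
lemma integral_sSup_tvInterEuclBall_le_two_term (hX : HasSubgaussianLinearForms X μ)
    (hρ : 0 ≤ ρ) (hr : 0 ≤ r) {J m : ℕ} (hp : p ≤ 2 ^ J * m) :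
    ∫ ω, sSup ((fun t => dotProd (X ω) t) '' tvInterEuclBall p ρ r) ∂μ ≤
      30 * (r * √m) + 36 * (ρ * √2 ^ J) := by
  have hterm : ∀ k ∈ range J, 2 * ((k : ℝ) + 1) * (√2 ^ (J - 1 - k) * (2 * ρ)) +
      3 * (r * √m) * (√2 ^ k * Real.exp (-(2 * ((k : ℝ) + 1)) / 2)) ≤
      (4 * (ρ * √2 ^ J) + 3 * (r * √m)) * (((k : ℝ) + 1) * (√2)⁻¹ ^ (k + 1)) := by
    intro k hk
    have hpow : √2 ^ (J - 1 - k) = √2 ^ J * (√2)⁻¹ ^ (k + 1) := by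
      rw [inv_pow, ← pow_sub₀ _ (by positivity) (mem_range.mp hk), Nat.sub_sub, add_comm]
    have hexp : √2 ^ k * Real.exp (-(2 * ((k : ℝ) + 1)) / 2) ≤
        ((k : ℝ) + 1) * (√2)⁻¹ ^ (k + 1) := by
      rw [neg_div, mul_div_cancel_left₀ _ (two_ne_zero' ℝ)]
      exact (sqrt_two_pow_mul_exp_neg_le k).trans
        (le_mul_of_one_le_left (by positivity) (le_add_of_nonneg_left k.cast_nonneg))
    calc _ ≤ 2 * ((k : ℝ) + 1) * (√2 ^ J * (√2)⁻¹ ^ (k + 1) * (2 * ρ)) +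
          3 * (r * √m) * (((k : ℝ) + 1) * (√2)⁻¹ ^ (k + 1)) := by rw [hpow]; gcongr
      _ = _ := by ring
  calc ∫ ω, sSup ((fun t => dotProd (X ω) t) '' tvInterEuclBall p ρ r) ∂μ
      ≤ 3 * (r * √m) + ∑ k ∈ range J, (2 * ((k : ℝ) + 1) * (√2 ^ (J - 1 - k) * (2 * ρ)) +
          3 * (r * √m) * (√2 ^ k * Real.exp (-(2 * ((k : ℝ) + 1)) / 2))) :=
        integral_sSup_tvInterEuclBall_le_haar hX hρ hr hp fun k => by positivity
    _ ≤ 3 * (r * √m) + (4 * (ρ * √2 ^ J) + 3 * (r * √m)) * 9 := by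
        gcongr
        refine (sum_le_sum hterm).trans ?_
        rw [← mul_sum]
        gcongr
        exact sum_succ_mul_inv_sqrt_two_pow_le J
    _ = 30 * (r * √m) + 36 * (ρ * √2 ^ J) := by ring

lemma exists_dyadic_blocks (hρ : 0 < ρ) (hr : 0 ≤ r) (hρr : ρ ≤ r * √p)
    (hrρ : r ≤ 2 * ρ * √p) :
    ∃ J m : ℕ, p ≤ 2 ^ J * m ∧ r * √m ≤ 2 * √(r * ρ * √p) ∧ ρ * √2 ^ J ≤ √(r * ρ * √p) := by
  obtain ⟨J, hJ_le, hJ_lt⟩ := exists_nat_pow_near ((one_le_div hρ).mpr hρr) (one_lt_two (α := ℝ))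
  rw [le_div_iff₀ hρ] at hJ_le
  rw [div_lt_iff₀ hρ, pow_succ] at hJ_lt
  have hblocks : r ^ 2 * ((p : ℝ) / 2 ^ J) ≤ 2 * (r * ρ * √p) := by
    rw [← mul_div_assoc, div_le_iff₀ (by positivity)]
    calc r ^ 2 * p = r * √p * (r * √p) := by
          rw [mul_mul_mul_comm, Real.mul_self_sqrt p.cast_nonneg, pow_two]
      _ ≤ r * √p * (2 ^ J * 2 * ρ) := by gcongr
      _ = 2 * (r * ρ * √p) * 2 ^ J := by ring
  have hradius : r ^ 2 ≤ 2 * (r * ρ * √p) := by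
    calc r ^ 2 = r * r := pow_two r
      _ ≤ r * (2 * ρ * √p) := by gcongr
      _ = 2 * (r * ρ * √p) := by ring
  refine ⟨J, p / 2 ^ J + 1, (Nat.lt_mul_div_succ p (by positivity)).le, ?_, ?_⟩
  · refine le_of_pow_le_pow_left₀ two_ne_zero (by positivity) ?_
    rw [mul_pow, mul_pow, Real.sq_sqrt (Nat.cast_nonneg _), Real.sq_sqrt (by positivity)]
    have hdiv : ((p / 2 ^ J + 1 : ℕ) : ℝ) ≤ (p : ℝ) / 2 ^ J + 1 := by
      have := Nat.cast_div_le (α := ℝ) (m := p) (n := 2 ^ J)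
      push_cast at this ⊢
      linarith
    linarith [mul_le_mul_of_nonneg_left hdiv (sq_nonneg r)]
  · refine Real.le_sqrt_of_sq_le ?_
    rw [mul_pow, ← pow_mul, mul_comm J, pow_mul, Real.sq_sqrt zero_le_two]
    linarith [mul_le_mul_of_nonneg_left hJ_le hρ.le]

lemma sqrt_mul_rpow_quarter (a : ℝ) {b : ℝ} (hb : 0 ≤ b) :
    √a * b ^ ((1 : ℝ) / 4) = √(a * √b) := by
  rw [Real.sqrt_mul' _ (Real.sqrt_nonneg b), Real.sqrt_eq_rpow b, Real.sqrt_eq_rpow (b ^ _),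
    ← Real.rpow_mul hb]
  norm_num

lemma integral_sSup_tvInterEuclBall_le_of_radius_le (hX : HasSubgaussianLinearForms X μ)
    (hρ : 0 ≤ ρ) (hr : 0 ≤ r) (hrρ : r ≤ 2 * ρ * √p) :
    ∫ ω, sSup ((fun t => dotProd (X ω) t) '' tvInterEuclBall p ρ r) ∂μ ≤
      96 * √(r * ρ * √p) := by
  rcases le_or_gt (r * √p) ρ with hsmall | hlarge
  · have hroot : r * √p ≤ √(r * ρ * √p) := Real.le_sqrt_of_sq_le <| by
      linarith [mul_le_mul_of_nonneg_left hsmall (by positivity : 0 ≤ r * √p)]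
    linarith [integral_sSup_tvInterEuclBall_le_radius hX hρ hr, Real.sqrt_nonneg (r * ρ * √p)]
  · have hρ_pos : 0 < ρ := hρ.lt_of_ne fun h => by
      simp only [← h, mul_zero, zero_mul] at hrρ
      exact hlarge.not_ge (by simp [le_antisymm hrρ hr, hρ])
    obtain ⟨J, m, hp, hcoarse, hfine⟩ := exists_dyadic_blocks hρ_pos hr hlarge.le hrρ
    linarith [integral_sSup_tvInterEuclBall_le_two_term hX hρ hr hp]

end Width

theorem gaussian_mean_width_tv_ball_inter_euclidean_ball_general {Ω : Type*} [MeasurableSpace Ω]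
    {μ : Measure Ω} [IsProbabilityMeasure μ] {p : ℕ} {X : Ω → Fin p → ℝ}
    (hX : HasSubgaussianLinearForms X μ) {ρ r : ℝ} (hρ : 0 ≤ ρ) (hr : 0 ≤ r) :
    ∫ ω, sSup ((fun t => dotProd (X ω) t) '' {t | tvNorm t ≤ ρ ∧ euclNorm t ≤ r}) ∂μ ≤
      96 * √(r * ρ) * (p : ℝ) ^ ((1 : ℝ) / 4) := by
  rw [mul_assoc, sqrt_mul_rpow_quarter _ p.cast_nonneg]
  change ∫ ω, sSup ((fun t => dotProd (X ω) t) '' tvInterEuclBall p ρ r) ∂μ ≤ _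
  rw [← tvInterEuclBall_min_radius]
  refine (integral_sSup_tvInterEuclBall_le_of_radius_le hX hρ (le_min hr (by positivity))
    (min_le_right _ _)).trans ?_
  gcongr
  exact min_le_left _ _

/-- Gaussian mean width of the intersection of a total-variation ball with a
Euclidean ball (Lemma 4): `w(ρ B_TV ∩ r B₂) ≤ c √(rρ) p^{1/4}`. -/
theorem gaussian_mean_width_tv_ball_inter_euclidean_ball :
    ∃ c : ℝ, 0 < c ∧ ∀ p : ℕ, 1 ≤ p → ∀ ρ r : ℝ, 0 < r → r ≤ ρ →
      (∫ g : Fin p → ℝ,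
          sSup ((fun t : Fin p → ℝ => dotProd g t) ''
            {t : Fin p → ℝ | tvNorm t ≤ ρ ∧ euclNorm t ≤ r})
          ∂(Measure.pi fun _ : Fin p => ProbabilityTheory.gaussianReal 0 1)) ≤
        c * Real.sqrt (r * ρ) * (p : ℝ) ^ ((1 : ℝ) / 4) := by
  refine ⟨96, by norm_num, fun p _ ρ r hr hrρ => ?_⟩
  exact gaussian_mean_width_tv_ball_inter_euclidean_ball_general
    (hasSubgaussianLinearForms_pi_gaussianReal (Fin p)) (hr.le.trans hrρ) hr.le
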